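/- arXiv:2502.14244 — 8 statements merged into one kernel-verified Lean document; each statement's English description precedes it below -/
import Mathlib

section
/- Let ι and κ be finite types. A Hermitian complex matrix H indexed by ι × κ is stoquastic if and only if there exist a real number K, a natural number M, and families C : Fin M → Matrix ι ι ℂ and D : Fin M → Matrix κ κ ℂ, with every entry of every C a and every D a a nonnegative real number, such that H = (K : ℂ) • 1 − ∑ a, (C a ⊗ₖ D a + (C a)ᴴ ⊗ₖ (D a)ᴴ). (This is the decomposition H = K − ∑_a (C_a ⊗ D_a + C_a† ⊗ D_a†) of a stoquastic Hamiltonian into entrywise-nonnegative bipartite terms.) -/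
/-!
If `H` is stoquastic, then for `K` at least every diagonal entry of `H`, the Hermitian matrix
`G = K - H` is entrywise nonnegative. Expanding `G / 2` in matrix units, each of which is a
Kronecker product of matrix units, and using `G = G / 2 + (G / 2)ᴴ` gives the decomposition, with
one term per pair of indices. Conversely, off the diagonal `K • 1` vanishes and every term of the
sum has nonnegative entries.
-/

open Matrix Kronecker

/-- A complex matrix is stoquastic if every off-diagonal entry is a nonpositive
real number. -/
def Stoquastic {ι : Type*} [Fintype ι] (H : Matrix ι ι ℂ) : Prop :=
  ∀ x y, x ≠ y → (H x y).im = 0 ∧ (H x y).re ≤ 0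

/-- Expansion in Kronecker products of matrix units; the coefficient is put in the left factor. -/
lemma sum_single_kronecker_single {ι κ : Type*} [Fintype ι] [DecidableEq ι] [Fintype κ]
    [DecidableEq κ] (A : Matrix (ι × κ) (ι × κ) ℂ) :
    ∑ s : (ι × κ) × (ι × κ),
      single s.1.1 s.2.1 (A s.1 s.2) ⊗ₖ single s.1.2 s.2.2 (1 : ℂ) = A := by
  rw [Fintype.sum_prod_type]
  conv_rhs => rw [matrix_eq_sum_single A]
  simp [single_kronecker_single]

/-- For a Hermitian stoquastic matrix, the sum of the absolute values of the diagonal entries is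
a large enough shift to make `K - H` entrywise nonnegative. -/
lemma exists_shift_nonneg {n : Type*} [Fintype n] [DecidableEq n] (H : Matrix n n ℂ)
    (hH : H.IsHermitian) (hs : Stoquastic H) :
    ∃ K : ℝ, ∀ x y, (((K : ℂ) • (1 : Matrix n n ℂ) - H) x y).im = 0 ∧
      0 ≤ (((K : ℂ) • (1 : Matrix n n ℂ) - H) x y).re := by
  refine ⟨∑ x, |(H x x).re|, fun x y => ?_⟩
  by_cases hxy : x = y
  · subst hxy
    have him : (H x x).im = 0 := Complex.conj_eq_iff_im.mp (hH.apply x x)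
    have hle : |(H x x).re| ≤ ∑ z, |(H z z).re| :=
      Finset.single_le_sum (f := fun z => |(H z z).re|) (fun z _ => abs_nonneg _)
        (Finset.mem_univ x)
    have habs := le_abs_self (H x x).re
    simp only [Matrix.sub_apply, Matrix.smul_apply, Matrix.one_apply_eq, smul_eq_mul, mul_one,
      Complex.sub_im, Complex.sub_re, Complex.ofReal_im, Complex.ofReal_re, him]
    exact ⟨sub_zero 0, by linarith⟩
  · simpa [Matrix.one_apply_ne hxy] using hs x y hxy

theorem stmt_1 {ι κ : Type*} [Fintype ι] [DecidableEq ι] [Fintype κ] [DecidableEq κ]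
    (H : Matrix (ι × κ) (ι × κ) ℂ) (hH : H.IsHermitian) :
    Stoquastic H ↔
      ∃ (K : ℝ) (M : ℕ) (C : Fin M → Matrix ι ι ℂ) (D : Fin M → Matrix κ κ ℂ),
        (∀ a x y, ((C a) x y).im = 0 ∧ 0 ≤ ((C a) x y).re) ∧
        (∀ a z w, ((D a) z w).im = 0 ∧ 0 ≤ ((D a) z w).re) ∧
        H = (K : ℂ) • (1 : Matrix (ι × κ) (ι × κ) ℂ)
            - ∑ a, (C a ⊗ₖ D a + (C a)ᴴ ⊗ₖ (D a)ᴴ) := by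
  constructor
  · intro hs
    obtain ⟨K, hK⟩ := exists_shift_nonneg H hH hs
    set G : Matrix (ι × κ) (ι × κ) ℂ := (K : ℂ) • 1 - H with hG
    have hGH : Gᴴ = G := by
      simp [hG, conjTranspose_sub, conjTranspose_smul, hH.eq]
    let A : Matrix (ι × κ) (ι × κ) ℂ := (1 / 2 : ℝ) • G
    have hA : A + Aᴴ = G := by
      simp only [A, conjTranspose_smul, hGH, star_trivial, ← add_smul]
      norm_num
    let e := Fintype.equivFin ((ι × κ) × (ι × κ))
    refine ⟨K, _,
      fun a => single (e.symm a).1.1 (e.symm a).2.1 (A (e.symm a).1 (e.symm a).2),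
      fun a => single (e.symm a).1.2 (e.symm a).2.2 1, fun a x y => ?_, fun a z w => ?_, ?_⟩
    · have h := hK (e.symm a).1 (e.symm a).2
      simp only [single_apply]
      split_ifs
      · simp [A, h.1, h.2]
      · simp
    · simp only [single_apply]
      split_ifs <;> simp
    · rw [e.symm.sum_comp (fun s : (ι × κ) × (ι × κ) =>
        single s.1.1 s.2.1 (A s.1 s.2) ⊗ₖ single s.1.2 s.2.2 (1 : ℂ) +
          (single s.1.1 s.2.1 (A s.1 s.2))ᴴ ⊗ₖ (single s.1.2 s.2.2 (1 : ℂ))ᴴ)]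
      simp only [← conjTranspose_kronecker, Finset.sum_add_distrib, ← conjTranspose_sum,
        sum_single_kronecker_single, hA]
      simp [hG]
  · rintro ⟨K, M, C, D, hC, hD, rfl⟩ x y hxy
    simp only [Matrix.sub_apply, Matrix.smul_apply, Matrix.one_apply_ne hxy, smul_zero, zero_sub,
      Matrix.sum_apply, Matrix.add_apply, kroneckerMap_apply, conjTranspose_apply,
      Complex.neg_im, Complex.neg_re, Complex.im_sum, Complex.re_sum, neg_eq_zero, neg_nonpos]
    refine ⟨Finset.sum_eq_zero fun a _ => ?_, Finset.sum_nonneg fun a _ => ?_⟩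
    · simp [Complex.mul_im, (hC a _ _).1, (hD a _ _).1]
    · simpa [Complex.mul_re, (hC a _ _).1, (hD a _ _).1] using
        add_nonneg (mul_nonneg (hC a x.1 y.1).2 (hD a x.2 y.2).2)
          (mul_nonneg (hC a y.1 x.1).2 (hD a y.2 x.2).2)
end

section
/- Let P Q : Matrix (Fin 2) (Fin 2) ℂ, let Γ be a complex matrix on the two-qubit space Fin 2 × Fin 2, and let Δ > 0 be real. Set A := P ⊗ₖ 1, B := 1 ⊗ₖ Q, χ := A + Bᴴ, G := Aᴴ * A + B * Bᴴ, and on the three-qubit space (Fin 2 × Fin 2) × Bool define V := −(Real.sqrt Δ : ℂ) • (χ ⊗ₖ S⁺ + χᴴ ⊗ₖ S⁻) + (Γ + G) ⊗ₖ 1 and Π₋ := 1 ⊗ₖ E₀. Then Π₋ * V * Π₋ − Π₋ * V * ((Δ⁻¹ : ℂ) • (1 ⊗ₖ E₁)) * V * Π₋ = (Γ − (P ⊗ₖ Q + Pᴴ ⊗ₖ Qᴴ)) ⊗ₖ E₀. (Second-order effective Hamiltonian of the Subdivision gadget: the two-qubit interaction P_u P_v + P_u† P_v† is simulated through a single mediator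 qubit.) -/
/-!
With respect to the mediator qubit, `V` has diagonal blocks `Γ + G` and off-diagonal blocks
`-√Δ χ`, `-√Δ χᴴ`. Hence the first-order term is `(Γ + G) ⊗ E₀`, and the second-order term, which
passes once through `|true⟩`, is `Δ⁻¹ (√Δ)² χᴴ χ ⊗ E₀ = χᴴ χ ⊗ E₀` (`effective_second_order`).
Expanding `χᴴ χ = (Aᴴ + B) (A + Bᴴ)` gives `G` plus the cross terms `B A = P ⊗ Q` and
`Aᴴ Bᴴ = Pᴴ ⊗ Qᴴ`, so `G` cancels and the claimed interaction remains.
-/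

open Matrix Kronecker

/-- Raising operator on a single mediator qubit: a `1` at `(true, false)`. -/
def SplusB : Matrix Bool Bool ℂ :=
  Matrix.of fun s t => if s = true ∧ t = false then 1 else 0

/-- Lowering operator on a single mediator qubit. -/
def SminusB : Matrix Bool Bool ℂ := SplusBᴴ

/-- Projector onto `|false⟩`: a `1` at `(false, false)`. -/
def E0B : Matrix Bool Bool ℂ :=
  Matrix.of fun s t => if s = false ∧ t = false then 1 else 0

/-- Projector onto `|true⟩`: a `1` at `(true, true)`. -/
def E1B : Matrix Bool Bool ℂ :=
  Matrix.of fun s t => if s = true ∧ t = true then 1 else 0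

/-- The second-order effective Hamiltonian on `|false⟩` of a perturbation with diagonal blocks `M`
and off-diagonal blocks `c • X`, `c • Y`, where `d` is the inverse energy gap
and `c` is normalized by `c² d = 1`. -/
theorem effective_second_order {n : Type*} [Fintype n] [DecidableEq n]
    (X Y M : Matrix n n ℂ) (c d : ℂ) (hcd : c * c * d = 1) :
    ((1 : Matrix n n ℂ) ⊗ₖ E0B) * (c • (X ⊗ₖ SplusB + Y ⊗ₖ SminusB)
          + M ⊗ₖ (1 : Matrix Bool Bool ℂ)) * ((1 : Matrix n n ℂ) ⊗ₖ E0B)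
        - ((1 : Matrix n n ℂ) ⊗ₖ E0B) * (c • (X ⊗ₖ SplusB + Y ⊗ₖ SminusB)
          + M ⊗ₖ (1 : Matrix Bool Bool ℂ)) * (d • ((1 : Matrix n n ℂ) ⊗ₖ E1B))
          * (c • (X ⊗ₖ SplusB + Y ⊗ₖ SminusB) + M ⊗ₖ (1 : Matrix Bool Bool ℂ))
          * ((1 : Matrix n n ℂ) ⊗ₖ E0B)
      = (M - Y * X) ⊗ₖ E0B := by
  have h1 : E0B * SplusB = 0 := by
    ext i j; cases i <;> cases j <;> simp [E0B, SplusB, Matrix.mul_apply]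
  have h2 : E0B * SminusB = SminusB := by
    ext i j; cases i <;> cases j <;> simp [E0B, SminusB, SplusB, Matrix.mul_apply]
  have h3 : SminusB * E0B = 0 := by
    ext i j; cases i <;> cases j <;> simp [E0B, SminusB, SplusB, Matrix.mul_apply]
  have h4 : E0B * E0B = E0B := by
    ext i j; cases i <;> cases j <;> simp [E0B, Matrix.mul_apply]
  have h5 : SminusB * E1B = SminusB := by
    ext i j; cases i <;> cases j <;> simp [E1B, SminusB, SplusB, Matrix.mul_apply]
  have h6 : E0B * E1B = 0 := by
    ext i j; cases i <;> cases j <;> simp [E0B, E1B, Matrix.mul_apply]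
  have h7 : SminusB * SplusB = E0B := by
    ext i j; cases i <;> cases j <;> simp [E0B, SminusB, SplusB, Matrix.mul_apply]
  have h8 : SminusB * SminusB = 0 := by
    ext i j; cases i <;> cases j <;> simp [SminusB, SplusB, Matrix.mul_apply]
  simp only [mul_add, add_mul, smul_add, Matrix.mul_smul, Matrix.smul_mul, ← mul_kronecker_mul,
    h1, h2, h3, h4, h5, h6, h7, h8, one_mul, mul_one, kronecker_zero, smul_zero, zero_add,
    add_zero, smul_smul]
  have hcd' : c * (d * c) = 1 := by rw [← hcd]; ring
  simp only [hcd', one_smul]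
  ext i j
  simp [sub_mul]

theorem stmt_4 (P Q : Matrix (Fin 2) (Fin 2) ℂ)
    (Γ : Matrix (Fin 2 × Fin 2) (Fin 2 × Fin 2) ℂ) (Δ : ℝ) (hΔ : 0 < Δ) :
    let A := P ⊗ₖ (1 : Matrix (Fin 2) (Fin 2) ℂ);
    let B := (1 : Matrix (Fin 2) (Fin 2) ℂ) ⊗ₖ Q;
    let χ := A + Bᴴ;
    let G := Aᴴ * A + B * Bᴴ;
    let V : Matrix ((Fin 2 × Fin 2) × Bool) ((Fin 2 × Fin 2) × Bool) ℂ :=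
      (-(Real.sqrt Δ : ℂ)) • (χ ⊗ₖ SplusB + χᴴ ⊗ₖ SminusB)
        + (Γ + G) ⊗ₖ (1 : Matrix Bool Bool ℂ);
    let Pm := (1 : Matrix (Fin 2 × Fin 2) (Fin 2 × Fin 2) ℂ) ⊗ₖ E0B;
    Pm * V * Pm
        - Pm * V * (((Δ⁻¹ : ℝ) : ℂ) •
            ((1 : Matrix (Fin 2 × Fin 2) (Fin 2 × Fin 2) ℂ) ⊗ₖ E1B)) * V * Pm
      = (Γ - (P ⊗ₖ Q + Pᴴ ⊗ₖ Qᴴ)) ⊗ₖ E0B := by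
  intro A B χ G V Pm
  have hs : (-(Real.sqrt Δ : ℂ)) * (-(Real.sqrt Δ : ℂ)) * ((Δ⁻¹ : ℝ) : ℂ) = 1 := by
    rw [neg_mul_neg]
    norm_cast
    rw [Real.mul_self_sqrt hΔ.le, mul_inv_cancel₀ hΔ.ne']
  have hχ : Γ + G - χᴴ * χ = Γ - (P ⊗ₖ Q + Pᴴ ⊗ₖ Qᴴ) := by
    have hBA : B * A = P ⊗ₖ Q := by simp [A, B, ← mul_kronecker_mul]
    have hAB : Aᴴ * Bᴴ = Pᴴ ⊗ₖ Qᴴ := by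
      simp [A, B, conjTranspose_kronecker, ← mul_kronecker_mul]
    simp only [χ, G, conjTranspose_add, conjTranspose_conjTranspose, add_mul, mul_add, hBA, hAB]
    abel
  rw [← hχ]
  exact effective_second_order χ χᴴ (Γ + G) _ _ hs
end

section
/- Let P_u P_v P_s P_w : Matrix (Fin 2) (Fin 2) ℂ, let Γ be a complex matrix on the four-qubit space Fin 2 × Fin 2 × Fin 2 × Fin 2, and let Δ > 0 be real. Set A := P_u ⊗ₖ 1 ⊗ₖ 1 ⊗ₖ 1, B := 1 ⊗ₖ P_v ⊗ₖ 1 ⊗ₖ 1, C := 1 ⊗ₖ 1 ⊗ₖ P_s ⊗ₖ 1, D := 1 ⊗ₖ 1 ⊗ₖ 1 ⊗ₖ P_w, χ := A + Bᴴ + C + Dᴴ, G := Aᴴ*A + B*Bᴴ + Cᴴ*C + D*Dᴴ, and E := Aᴴ*C + Cᴴ*A + Aᴴ*Dᴴ + D*A + B*C + Cᴴ*Bᴴ + B*Dᴴ + D*Bᴴ. On the five-qubit space (system × Bool) define V := −(Real.sqrt Δ : ℂ) • (χ ⊗ₖ S⁺ + χᴴ ⊗ₖ S⁻) + (Γ +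 G) ⊗ₖ 1 and Π₋ := 1 ⊗ₖ E₀. Then Π₋ * V * Π₋ − Π₋ * V * ((Δ⁻¹ : ℂ) • (1 ⊗ₖ E₁)) * V * Π₋ = (Γ − (B*A + Aᴴ*Bᴴ) − (D*C + Cᴴ*Dᴴ) − E) ⊗ₖ E₀. (Second-order effective Hamiltonian of the Cross gadget: the two crossing interactions on the pairs (u,v) and (s,w) are simulated through one mediator qubit at the cost of the additional edge terms E between the pairs us, sv, vw and wu.) -/
open Matrix Kronecker

/-- The 2×2 identity matrix over `ℂ`. -/
def I2 : Matrix (Fin 2) (Fin 2) ℂ := 1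

/-- Second-order effective Hamiltonian of one mediator qubit coupled through an arbitrary `χ`, with
an arbitrary mediator-independent term `H`. -/
lemma second_order_mediator {n : Type*} [Fintype n] [DecidableEq n]
    (χ H : Matrix n n ℂ) (Δ : ℝ) (hΔ : 0 < Δ) :
    let V : Matrix (n × Bool) (n × Bool) ℂ :=
      (-(Real.sqrt Δ : ℂ)) • (χ ⊗ₖ SplusB + χᴴ ⊗ₖ SminusB) + H ⊗ₖ (1 : Matrix Bool Bool ℂ)
    let Pm := (1 : Matrix n n ℂ) ⊗ₖ E0B
    Pm * V * Pm - Pm * V * (((Δ⁻¹ : ℝ) : ℂ) • ((1 : Matrix n n ℂ) ⊗ₖ E1B)) * V * Pm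
      = (H - χᴴ * χ) ⊗ₖ E0B := by
  intro V Pm
  have e0p : E0B * SplusB = 0 := by
    ext i j; cases i <;> cases j <;> simp [E0B, SplusB, Matrix.mul_apply]
  have e0m : E0B * SminusB = SminusB := by
    ext i j; cases i <;> cases j <;> simp [E0B, SplusB, SminusB, Matrix.mul_apply]
  have me0 : SminusB * E0B = 0 := by
    ext i j; cases i <;> cases j <;> simp [E0B, SplusB, SminusB, Matrix.mul_apply]
  have me1 : SminusB * E1B = SminusB := by
    ext i j; cases i <;> cases j <;> simp [E1B, SplusB, SminusB, Matrix.mul_apply]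
  have e01 : E0B * E1B = 0 := by
    ext i j; cases i <;> cases j <;> simp [E0B, E1B, Matrix.mul_apply]
  have e00 : E0B * E0B = E0B := by
    ext i j; cases i <;> cases j <;> simp [E0B, Matrix.mul_apply]
  have mp : SminusB * SplusB = E0B := by
    ext i j; cases i <;> cases j <;> simp [E0B, SplusB, SminusB, Matrix.mul_apply]
  have mm : SminusB * SminusB = 0 := by
    ext i j; cases i <;> cases j <;> simp [SplusB, SminusB, Matrix.mul_apply]
  have hPV : Pm * V = (-(Real.sqrt Δ : ℂ)) • (χᴴ ⊗ₖ SminusB) + H ⊗ₖ E0B := by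
    simp only [Pm, V, mul_add, Matrix.mul_smul, ← Matrix.mul_kronecker_mul, e0p, e0m, one_mul,
      mul_one, Matrix.kronecker_zero, zero_add]
  have hPVP : Pm * V * Pm = H ⊗ₖ E0B := by
    rw [hPV]
    simp only [Pm, add_mul, Matrix.smul_mul, ← Matrix.mul_kronecker_mul, me0, e00, mul_one,
      Matrix.kronecker_zero, smul_zero, zero_add]
  have hPVE : Pm * V * (((Δ⁻¹ : ℝ) : ℂ) • ((1 : Matrix n n ℂ) ⊗ₖ E1B))
      = (((Δ⁻¹ : ℝ) : ℂ) * -(Real.sqrt Δ : ℂ)) • (χᴴ ⊗ₖ SminusB) := by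
    rw [hPV]
    simp only [Matrix.mul_smul, add_mul, Matrix.smul_mul, ← Matrix.mul_kronecker_mul, me1, e01,
      mul_one, Matrix.kronecker_zero, smul_zero, add_zero, smul_smul]
  have hc : (((Δ⁻¹ : ℝ) : ℂ) * -(Real.sqrt Δ : ℂ)) * -(Real.sqrt Δ : ℂ) = 1 := by
    have h : Δ⁻¹ * -Real.sqrt Δ * -Real.sqrt Δ = 1 := by
      rw [mul_assoc, neg_mul_neg, Real.mul_self_sqrt hΔ.le, inv_mul_cancel₀ hΔ.ne']
    exact_mod_cast h
  have hsecond : (χᴴ ⊗ₖ SminusB) * V * Pm = (-(Real.sqrt Δ : ℂ)) • ((χᴴ * χ) ⊗ₖ E0B) := by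
    simp only [Pm, V, mul_add, add_mul, Matrix.mul_smul, Matrix.smul_mul,
      ← Matrix.mul_kronecker_mul, mp, mm, me0, e00, mul_one, Matrix.kronecker_zero,
      add_zero]
  rw [hPVE, hPVP, Matrix.smul_mul, Matrix.smul_mul, hsecond, smul_smul, hc, one_smul,
    sub_eq_add_neg, sub_eq_add_neg, Matrix.add_kronecker, ← neg_one_smul ℂ (χᴴ * χ),
    Matrix.smul_kronecker, neg_one_smul]

theorem stmt_5 (Pu Pv Ps Pw : Matrix (Fin 2) (Fin 2) ℂ)
    (Γ : Matrix (Fin 2 × Fin 2 × Fin 2 × Fin 2) (Fin 2 × Fin 2 × Fin 2 × Fin 2) ℂ)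
    (Δ : ℝ) (hΔ : 0 < Δ) :
    let A := Pu ⊗ₖ (I2 ⊗ₖ (I2 ⊗ₖ I2));
    let B := I2 ⊗ₖ (Pv ⊗ₖ (I2 ⊗ₖ I2));
    let C := I2 ⊗ₖ (I2 ⊗ₖ (Ps ⊗ₖ I2));
    let D := I2 ⊗ₖ (I2 ⊗ₖ (I2 ⊗ₖ Pw));
    let χ := A + Bᴴ + C + Dᴴ;
    let G := Aᴴ * A + B * Bᴴ + Cᴴ * C + D * Dᴴ;
    let E := Aᴴ * C + Cᴴ * A + Aᴴ * Dᴴ + D * A + B * C + Cᴴ * Bᴴ + B * Dᴴ + D * Bᴴ;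
    let V : Matrix ((Fin 2 × Fin 2 × Fin 2 × Fin 2) × Bool)
        ((Fin 2 × Fin 2 × Fin 2 × Fin 2) × Bool) ℂ :=
      (-(Real.sqrt Δ : ℂ)) • (χ ⊗ₖ SplusB + χᴴ ⊗ₖ SminusB)
        + (Γ + G) ⊗ₖ (1 : Matrix Bool Bool ℂ);
    let Pm := (1 : Matrix (Fin 2 × Fin 2 × Fin 2 × Fin 2) (Fin 2 × Fin 2 × Fin 2 × Fin 2) ℂ) ⊗ₖ E0B;
    Pm * V * Pm
        - Pm * V * (((Δ⁻¹ : ℝ) : ℂ) •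
            ((1 : Matrix (Fin 2 × Fin 2 × Fin 2 × Fin 2) (Fin 2 × Fin 2 × Fin 2 × Fin 2) ℂ) ⊗ₖ E1B))
          * V * Pm
      = (Γ - (B * A + Aᴴ * Bᴴ) - (D * C + Cᴴ * Dᴴ) - E) ⊗ₖ E0B := by
  intro A B C D χ G E V Pm
  refine (second_order_mediator χ (Γ + G) Δ hΔ).trans ?_
  congr 1
  simp only [χ, G, E, Matrix.conjTranspose_add, Matrix.conjTranspose_conjTranspose, mul_add,
    add_mul]
  abel
end

section
/- Let P_u P_v P_w : Matrix (Fin 2) (Fin 2) ℂ, let Γ be a complex matrix on the three-qubit space Fin 2 × Fin 2 × Fin 2, and let Δ > 0 be real. Set A := P_u ⊗ₖ 1 ⊗ₖ 1, B := 1 ⊗ₖ P_v ⊗ₖ 1, C := 1 ⊗ₖ 1 ⊗ₖ P_w, χ := A + C + Bᴴ, and G := Aᴴ*A + B*Bᴴ + Cᴴ*C. On the four-qubit space (system × Bool) define V := −(Real.sqrt Δ : ℂ) • (χ ⊗ₖ S⁺ + χᴴ ⊗ₖ S⁻) + (Γ + G) ⊗ₖ 1 and Π₋ := 1 ⊗ₖ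 E₀. Then Π₋ * V * Π₋ − Π₋ * V * ((Δ⁻¹ : ℂ) • (1 ⊗ₖ E₁)) * V * Π₋ = (Γ − (B*A + Aᴴ*Bᴴ) − (B*C + Cᴴ*Bᴴ) − (Aᴴ*C + Cᴴ*A)) ⊗ₖ E₀. (Second-order effective Hamiltonian of the Fork gadget: the two interactions on the pairs (u,v) and (v,w) are simulated through one mediator qubit at the cost of the additional edge term between u and w.) -/
/-!
In the block decomposition along the mediator qubit, `V` has diagonal blocks `Γ + G`, lower-left
block `-√Δ χ` and upper-right block `-√Δ χᴴ`. The first-order term is thus `(Γ + G) ⊗ E₀`, and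
in the second-order term the only path `false → true → false` contributes
`Δ⁻¹ (√Δ)² χᴴ χ = χᴴ χ` (`effective_eq_schur`). Expanding `χᴴ χ` for `χ = A + C + Bᴴ` yields `G`
plus the three pair interactions, with no commutation relations needed; `G` cancels.
-/

open Matrix Kronecker

section MediatorProducts

lemma E0B_mul_SplusB : E0B * SplusB = 0 := by
  ext i j; cases i <;> cases j <;> simp [E0B, SplusB, Matrix.mul_apply]

lemma E0B_mul_SminusB : E0B * SminusB = SminusB := by
  ext i j; cases i <;> cases j <;> simp [E0B, SminusB, SplusB, Matrix.mul_apply]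

lemma E0B_mul_E0B : E0B * E0B = E0B := by
  ext i j; cases i <;> cases j <;> simp [E0B, Matrix.mul_apply]

lemma E0B_mul_E1B : E0B * E1B = 0 := by
  ext i j; cases i <;> cases j <;> simp [E0B, E1B, Matrix.mul_apply]

lemma SminusB_mul_E0B : SminusB * E0B = 0 := by
  ext i j; cases i <;> cases j <;> simp [E0B, SminusB, SplusB, Matrix.mul_apply]

lemma SminusB_mul_E1B : SminusB * E1B = SminusB := by
  ext i j; cases i <;> cases j <;> simp [E1B, SminusB, SplusB, Matrix.mul_apply]

lemma SminusB_mul_SplusB : SminusB * SplusB = E0B := by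
  ext i j; cases i <;> cases j <;> simp [E0B, SminusB, SplusB, Matrix.mul_apply]

lemma SminusB_mul_SminusB : SminusB * SminusB = 0 := by
  ext i j; cases i <;> cases j <;> simp [SminusB, SplusB, Matrix.mul_apply]

end MediatorProducts

/-- The second-order effective Hamiltonian of a single mediator qubit, for an arbitrary coupling
`χ` and an arbitrary mediator-independent term `H`: it equals `H - χᴴ χ` on the `false` sector. -/
lemma effective_eq_schur {n : Type*} [Fintype n] [DecidableEq n] (χ H : Matrix n n ℂ)
    {Δ : ℝ} (hΔ : 0 < Δ) :
    let V : Matrix (n × Bool) (n × Bool) ℂ :=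
      (-(Real.sqrt Δ : ℂ)) • (χ ⊗ₖ SplusB + χᴴ ⊗ₖ SminusB) + H ⊗ₖ (1 : Matrix Bool Bool ℂ)
    let Pm := (1 : Matrix n n ℂ) ⊗ₖ E0B
    Pm * V * Pm - Pm * V * (((Δ⁻¹ : ℝ) : ℂ) • ((1 : Matrix n n ℂ) ⊗ₖ E1B)) * V * Pm
      = (H - χᴴ * χ) ⊗ₖ E0B := by
  intro V Pm
  have hleft : Pm * V = (-(Real.sqrt Δ : ℂ)) • (χᴴ ⊗ₖ SminusB) + H ⊗ₖ E0B := by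
    simp only [Pm, V, mul_add, Matrix.mul_smul, ← mul_kronecker_mul, E0B_mul_SplusB, E0B_mul_SminusB,
      one_mul, mul_one, kronecker_zero, zero_add]
  have hfirst : Pm * V * Pm = H ⊗ₖ E0B := by
    rw [hleft]
    simp only [Pm, add_mul, Matrix.smul_mul, ← mul_kronecker_mul, SminusB_mul_E0B, E0B_mul_E0B,
      mul_one, kronecker_zero, smul_zero, zero_add]
  have hscalar : ((Δ⁻¹ : ℝ) : ℂ) * (-(Real.sqrt Δ : ℂ) * -(Real.sqrt Δ : ℂ)) = 1 := by
    rw [neg_mul_neg, ← Complex.ofReal_mul, Real.mul_self_sqrt hΔ.le, ← Complex.ofReal_mul,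
      inv_mul_cancel₀ hΔ.ne', Complex.ofReal_one]
  have hmid : Pm * V * (((Δ⁻¹ : ℝ) : ℂ) • ((1 : Matrix n n ℂ) ⊗ₖ E1B))
      = (((Δ⁻¹ : ℝ) : ℂ) * -(Real.sqrt Δ : ℂ)) • (χᴴ ⊗ₖ SminusB) := by
    rw [hleft]
    simp only [add_mul, Matrix.smul_mul, Matrix.mul_smul, ← mul_kronecker_mul, SminusB_mul_E1B, E0B_mul_E1B,
      mul_one, kronecker_zero, smul_zero, add_zero, smul_smul]
  have hsecond : Pm * V * (((Δ⁻¹ : ℝ) : ℂ) • ((1 : Matrix n n ℂ) ⊗ₖ E1B)) * V * Pm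
      = (χᴴ * χ) ⊗ₖ E0B := by
    rw [hmid]
    simp only [Pm, V, mul_add, add_mul, Matrix.smul_mul, Matrix.mul_smul, smul_add, ← mul_kronecker_mul,
      SminusB_mul_SplusB, SminusB_mul_SminusB, SminusB_mul_E0B, E0B_mul_E0B,
      mul_one, kronecker_zero, smul_zero, add_zero, smul_smul]
    rw [mul_comm (-(Real.sqrt Δ : ℂ)), mul_assoc, hscalar, one_smul]
  rw [hfirst, hsecond]
  ext i j
  simp only [Matrix.sub_apply, kroneckerMap_apply, sub_mul]

theorem stmt_6 (Pu Pv Pw : Matrix (Fin 2) (Fin 2) ℂ)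
    (Γ : Matrix (Fin 2 × Fin 2 × Fin 2) (Fin 2 × Fin 2 × Fin 2) ℂ)
    (Δ : ℝ) (hΔ : 0 < Δ) :
    let A := Pu ⊗ₖ (I2 ⊗ₖ I2);
    let B := I2 ⊗ₖ (Pv ⊗ₖ I2);
    let C := I2 ⊗ₖ (I2 ⊗ₖ Pw);
    let χ := A + C + Bᴴ;
    let G := Aᴴ * A + B * Bᴴ + Cᴴ * C;
    let V : Matrix ((Fin 2 × Fin 2 × Fin 2) × Bool) ((Fin 2 × Fin 2 × Fin 2) × Bool) ℂ :=
      (-(Real.sqrt Δ : ℂ)) • (χ ⊗ₖ SplusB + χᴴ ⊗ₖ SminusB)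
        + (Γ + G) ⊗ₖ (1 : Matrix Bool Bool ℂ);
    let Pm := (1 : Matrix (Fin 2 × Fin 2 × Fin 2) (Fin 2 × Fin 2 × Fin 2) ℂ) ⊗ₖ E0B;
    Pm * V * Pm
        - Pm * V * (((Δ⁻¹ : ℝ) : ℂ) •
            ((1 : Matrix (Fin 2 × Fin 2 × Fin 2) (Fin 2 × Fin 2 × Fin 2) ℂ) ⊗ₖ E1B)) * V * Pm
      = (Γ - (B * A + Aᴴ * Bᴴ) - (B * C + Cᴴ * Bᴴ) - (Aᴴ * C + Cᴴ * A)) ⊗ₖ E0B := by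
  intro A B C χ G V Pm
  have hχ : χᴴ * χ = G + (B * A + Aᴴ * Bᴴ) + (B * C + Cᴴ * Bᴴ) + (Aᴴ * C + Cᴴ * A) := by
    simp only [χ, G, conjTranspose_add, conjTranspose_conjTranspose, add_mul, mul_add]
    abel
  refine (effective_eq_schur χ (Γ + G) hΔ).trans ?_
  rw [hχ]
  congr 1
  abel
end

section
/- Let ι be a finite type, p : ℕ, Δ ≥ 0 a real number, Γ : Matrix ι ι ℂ stoquastic, and C D : Fin p → Matrix ι ι ℂ families such that every entry of every C a and every D a is a nonnegative real number and such that (C a)ᴴ * C a and D a * (D a)ᴴ are diagonal matrices for every a. Then on ι × (Fin p → Bool) the full gadget Hamiltonian Ĥ := (Δ : ℂ) • (∑ a, 1 ⊗ₖ N_a) + (Real.sqrt Δ : ℂ) • V_main + Γ ⊗ₖ 1 + V_extra, where V_main := −∑ a, ((C a + (D a)ᴴ) ⊗ₖ S_a⁺ + ((C a)ᴴ + D a) ⊗ₖ S_a⁻) and V_extra := ∑ a, ((C a)ᴴ * C a + D a * (D a)ᴴ) ⊗ₖ 1, is stoquastic. -/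
/-!
Stoquastic matrices form a convex cone containing all diagonal matrices and all negatives of
entrywise nonnegative matrices. Each summand of the gadget Hamiltonian lies in this cone: the
penalty term and `Vextra` are diagonal, `Vmain` is minus a sum of Kronecker products of entrywise
nonnegative matrices, and `Γ ⊗ₖ 1` has copies of `Γ` as its diagonal blocks and zeros elsewhere.
Sign conditions are handled in the order of `ComplexOrder`, where `z ≤ 0` means that `z` is real
and nonpositive.
-/

open Matrix Kronecker

/-- Raising operator on the `a`-th of `p` mediator qubits. -/
def Splus {p : ℕ} (a : Fin p) : Matrix (Fin p → Bool) (Fin p → Bool) ℂ :=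
  Matrix.of fun s t => if t a = false ∧ s = Function.update t a true then 1 else 0

/-- Lowering operator on the `a`-th mediator qubit. -/
def Sminus {p : ℕ} (a : Fin p) : Matrix (Fin p → Bool) (Fin p → Bool) ℂ :=
  (Splus a)ᴴ

/-- Number operator on the `a`-th mediator qubit. -/
def Nmat {p : ℕ} (a : Fin p) : Matrix (Fin p → Bool) (Fin p → Bool) ℂ :=
  Matrix.of fun s t => if s = t ∧ s a = true then 1 else 0

open scoped ComplexOrder

theorem stoquastic_iff {ι : Type*} [Fintype ι] {H : Matrix ι ι ℂ} :
    Stoquastic H ↔ ∀ x y, x ≠ y → H x y ≤ 0 := by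
  simp only [Stoquastic, Complex.le_def, Complex.zero_re, Complex.zero_im, and_comm]

theorem Stoquastic.add {ι : Type*} [Fintype ι] {A B : Matrix ι ι ℂ}
    (hA : Stoquastic A) (hB : Stoquastic B) : Stoquastic (A + B) := by
  rw [stoquastic_iff] at *
  exact fun x y h => add_nonpos (hA x y h) (hB x y h)

theorem Stoquastic.of_isDiag {ι : Type*} [Fintype ι] {A : Matrix ι ι ℂ}
    (hA : A.IsDiag) : Stoquastic A := by
  rw [stoquastic_iff]
  exact fun x y h => (hA h).le

theorem Matrix.IsDiag.sum {ι κ : Type*} [Fintype κ] {A : κ → Matrix ι ι ℂ}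
    (hA : ∀ a, (A a).IsDiag) : (∑ a, A a).IsDiag := by
  intro x y h
  rw [Matrix.sum_apply]
  exact Finset.sum_eq_zero fun a _ => hA a h

theorem Nmat_isDiag {p : ℕ} (a : Fin p) : (Nmat a).IsDiag := by
  intro s t h
  simp [Nmat, h]

theorem Splus_nonneg {p : ℕ} (a : Fin p) (s t : Fin p → Bool) : 0 ≤ Splus a s t := by
  simp only [Splus, Matrix.of_apply]
  split_ifs <;> simp

theorem Sminus_nonneg {p : ℕ} (a : Fin p) (s t : Fin p → Bool) : 0 ≤ Sminus a s t :=
  star_nonneg_iff.2 (Splus_nonneg a t s)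

/-- Off-diagonal entries of `Γ ⊗ₖ 1` either join different mediator states, and vanish, or are
off-diagonal entries of `Γ`. -/
theorem Stoquastic.kronecker_one {ι κ : Type*} [Fintype ι] [Fintype κ] [DecidableEq κ]
    {Γ : Matrix ι ι ℂ} (hΓ : Stoquastic Γ) : Stoquastic (Γ ⊗ₖ (1 : Matrix κ κ ℂ)) := by
  rw [stoquastic_iff] at *
  rintro ⟨x, s⟩ ⟨y, t⟩ h
  rw [Matrix.kroneckerMap_apply]
  by_cases hst : s = t
  · subst hst
    simpa using hΓ x y fun hxy => h (by rw [hxy])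
  · simp [hst]

theorem stmt_7 {ι : Type*} [Fintype ι] [DecidableEq ι] (p : ℕ) (Δ : ℝ) (hΔ : 0 ≤ Δ)
    (Γ : Matrix ι ι ℂ) (hΓ : Stoquastic Γ)
    (C D : Fin p → Matrix ι ι ℂ)
    (hC : ∀ a x y, ((C a) x y).im = 0 ∧ 0 ≤ ((C a) x y).re)
    (hD : ∀ a x y, ((D a) x y).im = 0 ∧ 0 ≤ ((D a) x y).re)
    (hCdiag : ∀ a, ((C a)ᴴ * C a).IsDiag)
    (hDdiag : ∀ a, (D a * (D a)ᴴ).IsDiag) :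
    let Vmain : Matrix (ι × (Fin p → Bool)) (ι × (Fin p → Bool)) ℂ :=
      -∑ a, ((C a + (D a)ᴴ) ⊗ₖ Splus a + ((C a)ᴴ + D a) ⊗ₖ Sminus a);
    let Vextra : Matrix (ι × (Fin p → Bool)) (ι × (Fin p → Bool)) ℂ :=
      ∑ a, ((C a)ᴴ * C a + D a * (D a)ᴴ) ⊗ₖ (1 : Matrix (Fin p → Bool) (Fin p → Bool) ℂ);
    Stoquastic
      ((Δ : ℂ) • (∑ a, (1 : Matrix ι ι ℂ) ⊗ₖ Nmat a)
        + (Real.sqrt Δ : ℂ) • Vmain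
        + Γ ⊗ₖ (1 : Matrix (Fin p → Bool) (Fin p → Bool) ℂ)
        + Vextra) := by
  intro Vmain Vextra
  have hC' : ∀ a x y, 0 ≤ C a x y := fun a x y =>
    Complex.nonneg_iff.2 ⟨(hC a x y).2, (hC a x y).1.symm⟩
  have hD' : ∀ a x y, 0 ≤ D a x y := fun a x y =>
    Complex.nonneg_iff.2 ⟨(hD a x y).2, (hD a x y).1.symm⟩
  refine ((Stoquastic.add (.of_isDiag ?_) ?_).add hΓ.kronecker_one).add (.of_isDiag ?_)
  · exact (Matrix.IsDiag.sum fun a => isDiag_one.kronecker (Nmat_isDiag a)).smul _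
  · rw [stoquastic_iff]
    rintro ⟨x, s⟩ ⟨y, t⟩ -
    simp only [Vmain, Matrix.smul_apply, Matrix.neg_apply, Matrix.sum_apply, smul_eq_mul]
    refine mul_nonpos_of_nonneg_of_nonpos (Complex.zero_le_real.2 (Real.sqrt_nonneg Δ))
      (neg_nonpos.2 (Finset.sum_nonneg fun a _ => ?_))
    exact add_nonneg
      (mul_nonneg (add_nonneg (hC' a x y) (star_nonneg_iff.2 (hD' a y x))) (Splus_nonneg a s t))
      (mul_nonneg (add_nonneg (star_nonneg_iff.2 (hC' a y x)) (hD' a x y)) (Sminus_nonneg a s t))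
  · exact Matrix.IsDiag.sum fun a => ((hCdiag a).add (hDdiag a)).kronecker isDiag_one
end

section
/- Let I₂ denote the 2×2 identity matrix and X := !![0,1;1,0], Y := !![0,−i;i,0], Z := !![1,0;0,−1] the Pauli matrices over ℂ. For every nonzero real number c and every P, Q ∈ {I₂, X, Y, Z}, the 4×4 matrix (c : ℂ) • (P ⊗ₖ Q) is stoquastic if and only if either (P ∈ {I₂, Z} and Q ∈ {I₂, Z}) or (c < 0 and (P,Q) ∈ {(X,I₂), (I₂,X), (X,X)}). (The single two-qubit Pauli interactions that are stoquastic are exactly those generated by {𝟙, −X, Z, ZZ, −XX}; in particular no nonzero real multiple of X ⊗ Z is stoquastic.) -/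
/-! The proof is a check of the sixteen Pauli pairs. The distinctness of `1, X, Y, Z` decides
which pairs are on the right-hand side. On the left, a product of `1`s and `Z`s is diagonal, so
there is no condition. The off-diagonal entries of `c • (P ⊗ₖ Q)` for `X ⊗ 1`, `1 ⊗ X` and
`X ⊗ X` are `0` or `c`, so the condition is `c ≤ 0`, i.e. `c < 0`. In all other cases there is
either an off-diagonal entry `± c * I`, or (for `X ⊗ Z`, `Z ⊗ X`, `Y ⊗ Y`) both `c` and `-c`
occur off the diagonal, and `c ≠ 0` is contradicted. -/

open Matrix Kronecker

/-- The Pauli X matrix. -/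
def PauliX : Matrix (Fin 2) (Fin 2) ℂ := !![0, 1; 1, 0]

/-- The Pauli Y matrix. -/
def PauliY : Matrix (Fin 2) (Fin 2) ℂ := !![0, -Complex.I; Complex.I, 0]

/-- The Pauli Z matrix. -/
def PauliZ : Matrix (Fin 2) (Fin 2) ℂ := !![1, 0; 0, -1]

lemma pauliX_ne_one : PauliX ≠ 1 := fun h => by
  simpa [PauliX] using congrFun (congrFun h 0) 1

lemma pauliY_ne_one : PauliY ≠ 1 := fun h => by
  simpa [PauliY] using congrFun (congrFun h 0) 1

lemma pauliZ_ne_one : PauliZ ≠ 1 := fun h => by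
  have := congrFun (congrFun h 1) 1
  norm_num [PauliZ, Complex.ext_iff] at this

lemma pauliX_ne_pauliY : PauliX ≠ PauliY := fun h => by
  simpa [PauliX, PauliY, Complex.ext_iff] using congrFun (congrFun h 0) 1

lemma pauliX_ne_pauliZ : PauliX ≠ PauliZ := fun h => by
  simpa [PauliX, PauliZ] using congrFun (congrFun h 0) 1

lemma pauliY_ne_pauliZ : PauliY ≠ PauliZ := fun h => by
  simpa [PauliY, PauliZ] using congrFun (congrFun h 0) 1

theorem stmt_12 (c : ℝ) (hc : c ≠ 0) (P Q : Matrix (Fin 2) (Fin 2) ℂ)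
    (hP : P ∈ ({1, PauliX, PauliY, PauliZ} : Set (Matrix (Fin 2) (Fin 2) ℂ)))
    (hQ : Q ∈ ({1, PauliX, PauliY, PauliZ} : Set (Matrix (Fin 2) (Fin 2) ℂ))) :
    Stoquastic ((c : ℂ) • (P ⊗ₖ Q)) ↔
      ((P ∈ ({1, PauliZ} : Set (Matrix (Fin 2) (Fin 2) ℂ)) ∧
        Q ∈ ({1, PauliZ} : Set (Matrix (Fin 2) (Fin 2) ℂ))) ∨
       (c < 0 ∧ (P, Q) ∈ ({(PauliX, 1), (1, PauliX), (PauliX, PauliX)} :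
          Set (Matrix (Fin 2) (Fin 2) ℂ × Matrix (Fin 2) (Fin 2) ℂ)))) := by
  have hlt : c ≤ 0 ↔ c < 0 := ⟨fun h => lt_of_le_of_ne h hc, le_of_lt⟩
  have hno : c ≤ 0 → ¬ 0 ≤ c := fun h h' => hc (le_antisymm h h')
  simp only [Set.mem_insert_iff, Set.mem_singleton_iff] at hP hQ
  rcases hP with rfl | rfl | rfl | rfl <;> rcases hQ with rfl | rfl | rfl | rfl <;>
    simp only [Set.mem_insert_iff, Set.mem_singleton_iff, Prod.mk.injEq,
      pauliX_ne_one, pauliY_ne_one, pauliZ_ne_one, pauliX_ne_pauliZ,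
      pauliY_ne_pauliZ, pauliX_ne_one.symm, pauliZ_ne_one.symm,
      pauliX_ne_pauliY.symm, pauliX_ne_pauliZ.symm] <;>
    simp [Stoquastic, Prod.forall, Fin.forall_fin_two, PauliX, PauliY, PauliZ,
      Matrix.one_apply, hc] <;>
    grind
end

section
/- Let n : ℕ and w : Fin n → Fin n → ℝ with w u v ≤ 0 for all u v. Then both of the n-qubit matrices H_XY := ∑ over pairs (u,v) with u ≠ v, (w u v : ℂ) • (X_u * X_v + Y_u * Y_v) and H_Heis := ∑ over pairs (u,v) with u ≠ v, (w u v : ℂ) • (X_u * X_v + Y_u * Y_v + Z_u * Z_v) are stoquastic. (The grouped Pauli interactions −(XX+YY) and −(XX+YY+ZZ), i.e. the antiferromagnetic XY- and the −Heisenberg interaction, are stoquastic.) -/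
/-!
Since the weights are nonpositive, it suffices that each two-qubit interaction has nonnegative real
off-diagonal entries (`stoquastic_sum`). For `u ≠ v`, both `X_u X_v` and `Y_u Y_v` connect a basis
state only to the one with bits `u` and `v` flipped, with amplitudes `1` and `±1` respectively, so
their sum has entries in `{0, 2}` (`XY_entry`). The `Z_u Z_v` term is diagonal (`ZZ_entry`).
-/

open Matrix

/-- The Pauli X operator acting on qubit `u` of an `n`-qubit system. -/
def XOp {n : ℕ} (u : Fin n) : Matrix (Fin n → Bool) (Fin n → Bool) ℂ :=
  Matrix.of fun s t => if s = Function.update t u (!(t u)) then 1 else 0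

/-- The Pauli Y operator acting on qubit `u` of an `n`-qubit system. -/
def YOp {n : ℕ} (u : Fin n) : Matrix (Fin n → Bool) (Fin n → Bool) ℂ :=
  Matrix.of fun s t =>
    if s = Function.update t u (!(t u)) then
      (if t u = false then Complex.I else -Complex.I)
    else 0

/-- The Pauli Z operator acting on qubit `u` of an `n`-qubit system. -/
def ZOp {n : ℕ} (u : Fin n) : Matrix (Fin n → Bool) (Fin n → Bool) ℂ :=
  Matrix.of fun s t => if s = t then (if s u = false then 1 else -1) else 0

/-- The terms of the Hamiltonian may be checked one at a time, and stoquasticity asks only for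
the off-diagonal entries of each term to be nonnegative reals, since the weights are nonpositive. -/
lemma stoquastic_sum {ι κ : Type*} [Fintype ι] (S : Finset κ) (w : κ → ℝ)
    (hw : ∀ q ∈ S, w q ≤ 0) (A : κ → Matrix ι ι ℂ)
    (hA : ∀ q ∈ S, ∀ x y, x ≠ y → ∃ c : ℝ, 0 ≤ c ∧ A q x y = c) :
    Stoquastic (∑ q ∈ S, (w q : ℂ) • A q) := by
  intro x y hxy
  rw [Matrix.sum_apply, Complex.im_sum, Complex.re_sum]
  constructor
  · refine Finset.sum_eq_zero fun q hq => ?_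
    obtain ⟨c, -, hc⟩ := hA q hq x y hxy
    simp [hc]
  · refine Finset.sum_nonpos fun q hq => ?_
    obtain ⟨c, hc0, hc⟩ := hA q hq x y hxy
    simpa [hc] using mul_nonpos_of_nonpos_of_nonneg (hw q hq) hc0

lemma XOp_mul_apply {n : ℕ} (u v : Fin n) (s t : Fin n → Bool) :
    (XOp u * XOp v) s t =
      XOp u s (Function.update t v (!(t v))) := by
  simp [Matrix.mul_apply, XOp]

lemma YOp_mul_apply {n : ℕ} (u v : Fin n) (s t : Fin n → Bool) :
    (YOp u * YOp v) s t =
      YOp u s (Function.update t v (!(t v))) *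
        (if t v = false then Complex.I else -Complex.I) := by
  simp [Matrix.mul_apply, YOp]

/-- `X_u X_v` and `Y_u Y_v` flip the same two bits, `Y_u Y_v` with sign `-1` if these bits agree
and `+1` if they differ, so every entry of the sum is `0` or `2`. -/
lemma XY_entry {n : ℕ} {u v : Fin n} (huv : u ≠ v) (s t : Fin n → Bool) :
    ∃ c : ℝ, 0 ≤ c ∧ (XOp u * XOp v + YOp u * YOp v) s t = c := by
  rw [Matrix.add_apply, XOp_mul_apply, YOp_mul_apply]
  simp only [XOp, YOp, Matrix.of_apply, Function.update_of_ne huv]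
  split_ifs
  · exact ⟨0, le_rfl, by simp⟩
  · exact ⟨2, by norm_num, by simp; norm_num⟩
  · exact ⟨2, by norm_num, by simp; norm_num⟩
  · exact ⟨0, le_rfl, by simp⟩
  all_goals exact ⟨0, le_rfl, by simp⟩

lemma ZZ_entry {n : ℕ} (u v : Fin n) {s t : Fin n → Bool} (hst : s ≠ t) :
    (ZOp u * ZOp v) s t = 0 := by
  simp [Matrix.mul_apply, ZOp, hst]

theorem stmt_14 (n : ℕ) (w : Fin n → Fin n → ℝ) (hw : ∀ u v, w u v ≤ 0) :
    Stoquastic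
      (∑ q ∈ Finset.univ.filter (fun q : Fin n × Fin n => q.1 ≠ q.2),
        (w q.1 q.2 : ℂ) • (XOp q.1 * XOp q.2 + YOp q.1 * YOp q.2)) ∧
    Stoquastic
      (∑ q ∈ Finset.univ.filter (fun q : Fin n × Fin n => q.1 ≠ q.2),
        (w q.1 q.2 : ℂ) • (XOp q.1 * XOp q.2 + YOp q.1 * YOp q.2 + ZOp q.1 * ZOp q.2)) := by
  have hS : ∀ q ∈ Finset.univ.filter (fun q : Fin n × Fin n => q.1 ≠ q.2), q.1 ≠ q.2 :=
    fun q hq => (Finset.mem_filter.mp hq).2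
  constructor
  · exact stoquastic_sum _ (fun q : Fin n × Fin n => w q.1 q.2) (fun q _ => hw q.1 q.2) _
      fun q hq x y _ => XY_entry (hS q hq) x y
  · refine stoquastic_sum _ (fun q : Fin n × Fin n => w q.1 q.2) (fun q _ => hw q.1 q.2) _
      fun q hq x y hxy => ?_
    rw [Matrix.add_apply, ZZ_entry _ _ hxy, add_zero]
    exact XY_entry (hS q hq) x y
end

section
/- Let 1 ≤ n ≤ m, let A : Matrix (Fin n) (Fin n) ℂ and B : Matrix (Fin m) (Fin m) ℂ be Hermitian, and let E : Matrix (Fin m) (Fin n) ℂ satisfy Eᴴ * E = 1 (E is an isometry) and B * E = E * (Eᴴ * B * E) (the range of E is invariant under B). Assume that for every w : Fin m → ℂ with Eᴴ *ᵥ w = 0 one has re ⟪w, B *ᵥ w⟫ ≥ μ * ‖w‖², where μ is the largest eigenvalue of the Hermitian matrix Eᴴ * B * E (so the range of E spans the eigenspaces of B belonging to its n smallest eigenvalues). If ‖A − Eᴴ * B * E‖ ≤ ε for a real ε ≥ 0, where ‖·‖ denotes the ℓ²→ℓ² operator norm, then for every j : Fin n one has |λ_j(A) − λ_j(B)| ≤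 ε, where λ_j(·) denotes the j-th smallest eigenvalue counted with multiplicity (eigenvalues listed in nondecreasing order). (Eigenvalue simulation: if (B, E) is an (η,ε)-simulator for A, the j-th smallest eigenvalues of A and B differ by at most ε.) -/
/-!
Write `q M v = re ⟪v, M v⟫` and `A' = Eᴴ B E`. In an eigenbasis of `M`, `q M v` is the sum of
`λᵢ |yᵢ|²` over the coordinates `y` of `v`. A dimension count (`exists_compare`) gives, for
Hermitian `N`, `P` and any linear `F`, a nonzero `v` lying in the span of the eigenvectors of `N`
for `λ_0, …, λ_j` such that `F v` is orthogonal to the eigenvectors of `P` for `λ_0, …, λ_{j-1}`: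
there are `j + 1` free coordinates and `j` conditions. Hence `q N v ≤ λ_j(N) ‖v‖²` and
`λ_j(P) ‖F v‖² ≤ q P (F v)`.

* With `F = E` (from `A` to `B`): `λ_j(B) ‖v‖² ≤ q B (E v) = q A' v ≤ q A v + ε ‖v‖²`, which is at
  most `(λ_j(A) + ε) ‖v‖²`.
* With `F = Eᴴ` (from `B` to `A`): split `w = E v + u` with `v = Eᴴ w` and `Eᴴ u = 0`. Invariance
  kills the cross terms, so `λ_j(B) ‖w‖² ≥ q B w = q A' v + q B u ≥ (λ_j(A) - ε) ‖v‖² + μ ‖u‖²`,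
  and `μ ≥ λ_j(A) - ε` by testing `A'` on an eigenvector of `A`.
-/

open Matrix

/-- The ℓ² norm of a complex vector. -/
noncomputable def l2norm {m : ℕ} (w : Fin m → ℂ) : ℝ :=
  Real.sqrt (∑ i, Complex.normSq (w i))

/-- The standard Hermitian inner product on `ℂ^m` (antilinear in the first slot). -/
noncomputable def hermInner {m : ℕ} (v w : Fin m → ℂ) : ℂ := ∑ i, star (v i) * w i

/-- The eigenvalues of a Hermitian matrix, listed in nondecreasing order counted
with multiplicity. -/
noncomputable def sortedEigenvalues {k : ℕ} {M : Matrix (Fin k) (Fin k) ℂ}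
    (hM : M.IsHermitian) : Fin k → ℝ :=
  hM.eigenvalues ∘ Tuple.sort hM.eigenvalues

/-- The squared `ℓ²` norm, in the form `∑ |vᵢ|²`. -/
noncomputable def normSum {k : ℕ} (v : Fin k → ℂ) : ℝ := ∑ i, Complex.normSq (v i)

/-- The quadratic form `re ⟪v, M v⟫`. -/
noncomputable def quadForm {k : ℕ} (M : Matrix (Fin k) (Fin k) ℂ) (v : Fin k → ℂ) : ℝ :=
  (star v ⬝ᵥ (M *ᵥ v)).re

lemma normSum_nonneg {k : ℕ} (v : Fin k → ℂ) : 0 ≤ normSum v :=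
  Finset.sum_nonneg fun _ _ => Complex.normSq_nonneg _

lemma normSum_pos {k : ℕ} {v : Fin k → ℂ} (hv : v ≠ 0) : 0 < normSum v := by
  obtain ⟨i, hi⟩ := Function.ne_iff.mp hv
  exact Finset.sum_pos' (fun _ _ => Complex.normSq_nonneg _)
    ⟨i, Finset.mem_univ _, Complex.normSq_pos.mpr hi⟩

lemma l2norm_sq {k : ℕ} (v : Fin k → ℂ) : l2norm v ^ 2 = normSum v :=
  Real.sq_sqrt (normSum_nonneg v)

lemma normSum_eq {k : ℕ} (v : Fin k → ℂ) : normSum v = (star v ⬝ᵥ v).re := by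
  simp [normSum, dotProduct, Complex.normSq_apply]

lemma normSum_mulVec {k l : ℕ} (F : Matrix (Fin l) (Fin k) ℂ) (hF : Fᴴ * F = 1)
    (v : Fin k → ℂ) : normSum (F *ᵥ v) = normSum v := by
  rw [normSum_eq, normSum_eq, star_mulVec, ← dotProduct_mulVec, mulVec_mulVec, hF, one_mulVec]

lemma quadForm_mulVec {k l : ℕ} (F : Matrix (Fin l) (Fin k) ℂ) (M : Matrix (Fin l) (Fin l) ℂ)
    (v : Fin k → ℂ) : quadForm M (F *ᵥ v) = quadForm (Fᴴ * M * F) v := by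
  simp only [quadForm]
  rw [star_mulVec, ← dotProduct_mulVec, mulVec_mulVec, mulVec_mulVec]

/-- The coordinates of `v` in the eigenbasis of a Hermitian matrix. -/
noncomputable def eigCoord {k : ℕ} {M : Matrix (Fin k) (Fin k) ℂ} (hM : M.IsHermitian)
    (v : Fin k → ℂ) : Fin k → ℂ :=
  (hM.eigenvectorUnitary : Matrix (Fin k) (Fin k) ℂ)ᴴ *ᵥ v

lemma normSum_eigCoord {k : ℕ} {M : Matrix (Fin k) (Fin k) ℂ} (hM : M.IsHermitian)
    (v : Fin k → ℂ) : normSum (eigCoord hM v) = normSum v := by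
  apply normSum_mulVec
  rw [conjTranspose_conjTranspose]
  exact Unitary.mul_star_self_of_mem hM.eigenvectorUnitary.2

lemma quadForm_eq_sum {k : ℕ} {M : Matrix (Fin k) (Fin k) ℂ} (hM : M.IsHermitian)
    (v : Fin k → ℂ) :
    quadForm M v = ∑ i, hM.eigenvalues i * Complex.normSq (eigCoord hM v i) := by
  have h : M = ((hM.eigenvectorUnitary : Matrix (Fin k) (Fin k) ℂ)ᴴ)ᴴ
      * diagonal (fun i => (hM.eigenvalues i : ℂ))
      * (hM.eigenvectorUnitary : Matrix (Fin k) (Fin k) ℂ)ᴴ := by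
    conv_lhs => rw [hM.spectral_theorem, Unitary.conjStarAlgAut_apply]
    rw [conjTranspose_conjTranspose]
    rfl
  conv_lhs => rw [h]
  rw [← quadForm_mulVec]
  simp only [quadForm, eigCoord, dotProduct, mulVec_diagonal, Complex.re_sum]
  refine Finset.sum_congr rfl fun i _ => ?_
  simp [Complex.normSq_apply]
  ring

/-- If every eigenvalue whose coordinate does not vanish at `v` is at most `c`, then so is the
Rayleigh quotient of `v`. -/
lemma quadForm_le {k : ℕ} {M : Matrix (Fin k) (Fin k) ℂ} (hM : M.IsHermitian) (v : Fin k → ℂ)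
    (c : ℝ) (h : ∀ i, eigCoord hM v i = 0 ∨ hM.eigenvalues i ≤ c) :
    quadForm M v ≤ c * normSum v := by
  rw [quadForm_eq_sum hM, ← normSum_eigCoord hM, normSum, Finset.mul_sum]
  refine Finset.sum_le_sum fun i _ => ?_
  rcases h i with h | h
  · simp [h]
  · exact mul_le_mul_of_nonneg_right h (Complex.normSq_nonneg _)

lemma le_quadForm {k : ℕ} {M : Matrix (Fin k) (Fin k) ℂ} (hM : M.IsHermitian) (v : Fin k → ℂ)
    (c : ℝ) (h : ∀ i, eigCoord hM v i = 0 ∨ c ≤ hM.eigenvalues i) :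
    c * normSum v ≤ quadForm M v := by
  rw [quadForm_eq_sum hM, ← normSum_eigCoord hM, normSum, Finset.mul_sum]
  refine Finset.sum_le_sum fun i _ => ?_
  rcases h i with h | h
  · simp [h]
  · exact mul_le_mul_of_nonneg_right h (Complex.normSq_nonneg _)

/-- The dimension count behind the min-max principle, comparing the `j`-th eigenvalues of two
Hermitian matrices along a linear map `F` between their spaces. -/
lemma exists_compare {k l : ℕ} {N : Matrix (Fin k) (Fin k) ℂ} {P : Matrix (Fin l) (Fin l) ℂ}
    (hN : N.IsHermitian) (hP : P.IsHermitian) (F : Matrix (Fin l) (Fin k) ℂ)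
    (j : Fin k) (j' : Fin l) (hj : (j : ℕ) = j') :
    ∃ v : Fin k → ℂ, v ≠ 0 ∧ quadForm N v ≤ sortedEigenvalues hN j * normSum v ∧
      sortedEigenvalues hP j' * normSum (F *ᵥ v) ≤ quadForm P (F *ᵥ v) := by
  let σ := Tuple.sort hN.eigenvalues
  let τ := Tuple.sort hP.eigenvalues
  -- The coordinates to be killed: above `j` for `v`, below `j'` for `F v`.
  let L : (Fin k → ℂ) →ₗ[ℂ] ({i : Fin k // j < i} → ℂ) × ({i : Fin l // i < j'} → ℂ) :=
    ((LinearMap.funLeft ℂ ℂ fun i : {i : Fin k // j < i} => σ i) ∘ₗ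
      (hN.eigenvectorUnitary : Matrix (Fin k) (Fin k) ℂ)ᴴ.mulVecLin).prod
    ((LinearMap.funLeft ℂ ℂ fun i : {i : Fin l // i < j'} => τ i) ∘ₗ
      (hP.eigenvectorUnitary : Matrix (Fin l) (Fin l) ℂ)ᴴ.mulVecLin ∘ₗ F.mulVecLin)
  have hker : LinearMap.ker L ≠ ⊥ := by
    apply LinearMap.ker_ne_bot_of_finrank_lt
    have h1 : Fintype.card {i : Fin k // j < i} = k - 1 - j := by
      rw [Fintype.card_subtype, Finset.filter_lt_eq_Ioi, Fin.card_Ioi]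
    have h2 : Fintype.card {i : Fin l // i < j'} = j' := by
      rw [Fintype.card_subtype, Finset.filter_gt_eq_Iio, Fin.card_Iio]
    rw [Module.finrank_prod, Module.finrank_fintype_fun_eq_card,
      Module.finrank_fintype_fun_eq_card, Module.finrank_fintype_fun_eq_card, h1, h2,
      Fintype.card_fin]
    omega
  obtain ⟨v, hv, hv0⟩ := Submodule.exists_mem_ne_zero_of_ne_bot hker
  have hv' : L v = 0 := hv
  refine ⟨v, hv0, quadForm_le hN v _ fun i => ?_, le_quadForm hP _ _ fun i => ?_⟩
  · rcases lt_or_ge j (σ.symm i) with h | h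
    · left
      have := congrFun (congrArg Prod.fst hv') ⟨σ.symm i, h⟩
      simpa [L, LinearMap.funLeft_apply, eigCoord] using this
    · right
      have := Tuple.monotone_sort hN.eigenvalues h
      simpa [σ, sortedEigenvalues] using this
  · rcases lt_or_ge (τ.symm i) j' with h | h
    · left
      have := congrFun (congrArg Prod.snd hv') ⟨τ.symm i, h⟩
      simpa [L, LinearMap.funLeft_apply, eigCoord] using this
    · right
      have := Tuple.monotone_sort hP.eigenvalues h
      simpa [τ, sortedEigenvalues] using this

/-- A norm bound on `M` bounds its quadratic form, by Cauchy–Schwarz. -/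
lemma abs_quadForm_le {k : ℕ} (M : Matrix (Fin k) (Fin k) ℂ) (ε : ℝ) (v : Fin k → ℂ)
    (h : l2norm (M *ᵥ v) ≤ ε * l2norm v) : |quadForm M v| ≤ ε * normSum v := by
  have hn : ∀ x : Fin k → ℂ, ‖WithLp.toLp 2 x‖ = l2norm x := fun x => by
    simp [EuclideanSpace.norm_eq, l2norm, Complex.normSq_eq_norm_sq]
  have hi : inner ℂ (WithLp.toLp 2 v) (WithLp.toLp 2 (M *ᵥ v)) = star v ⬝ᵥ (M *ᵥ v) := by
    rw [EuclideanSpace.inner_toLp_toLp, dotProduct_comm]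
  have h0 : 0 ≤ l2norm v := Real.sqrt_nonneg _
  calc |quadForm M v| ≤ ‖star v ⬝ᵥ (M *ᵥ v)‖ := Complex.abs_re_le_norm _
    _ ≤ l2norm v * l2norm (M *ᵥ v) := by
      rw [← hi, ← hn, ← hn]; exact norm_inner_le_norm _ _
    _ ≤ l2norm v * (ε * l2norm v) := mul_le_mul_of_nonneg_left h h0
    _ = ε * normSum v := by rw [← l2norm_sq]; ring

lemma quadForm_sub {k : ℕ} (M N : Matrix (Fin k) (Fin k) ℂ) (v : Fin k → ℂ) :
    quadForm (M - N) v = quadForm M v - quadForm N v := by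
  simp [quadForm, sub_mulVec, dotProduct_sub]

/-- Adding to `E v` a vector `u` orthogonal to the range of `E` produces no cross terms for a
Hermitian matrix that leaves that range invariant. -/
lemma quadForm_add_of_invariant {n m : ℕ} {B : Matrix (Fin m) (Fin m) ℂ} (hB : B.IsHermitian)
    {E : Matrix (Fin m) (Fin n) ℂ} {C : Matrix (Fin n) (Fin n) ℂ} (hInv : B * E = E * C)
    (v : Fin n → ℂ) (u : Fin m → ℂ) (hu : Eᴴ *ᵥ u = 0) :
    quadForm B (E *ᵥ v + u) = quadForm B (E *ᵥ v) + quadForm B u := by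
  have hu' : star u ᵥ* E = 0 := by
    have := congrArg star hu
    rwa [star_mulVec, conjTranspose_conjTranspose, star_zero] at this
  have h1 : star u ⬝ᵥ (B *ᵥ (E *ᵥ v)) = 0 := by
    rw [mulVec_mulVec, hInv, ← mulVec_mulVec, dotProduct_mulVec, hu', zero_dotProduct]
  have h2 : star (E *ᵥ v) ⬝ᵥ (B *ᵥ u) = 0 := by
    have hBE : Eᴴ * B = Cᴴ * Eᴴ := by
      have := congrArg conjTranspose hInv
      rwa [conjTranspose_mul, conjTranspose_mul, hB.eq] at this
    rw [star_mulVec, ← dotProduct_mulVec, mulVec_mulVec, hBE, ← mulVec_mulVec, hu, mulVec_zero,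
      dotProduct_zero]
  simp only [quadForm, star_add, mulVec_add, add_dotProduct, dotProduct_add, h1, h2]
  simp

lemma normSum_eq_quadForm_one {k : ℕ} (v : Fin k → ℂ) : normSum v = quadForm 1 v := by
  rw [normSum_eq, quadForm, one_mulVec]

theorem stmt_16 {n m : ℕ} (hn : 1 ≤ n) (hnm : n ≤ m)
    (A : Matrix (Fin n) (Fin n) ℂ) (B : Matrix (Fin m) (Fin m) ℂ)
    (hA : A.IsHermitian) (hB : B.IsHermitian)
    (E : Matrix (Fin m) (Fin n) ℂ)
    (hE : Eᴴ * E = 1)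
    (hInv : B * E = E * (Eᴴ * B * E))
    (μ : ℝ)
    (hμ : IsGreatest
      (Set.range (Matrix.isHermitian_conjTranspose_mul_mul E hB).eigenvalues) μ)
    (hgap : ∀ w : Fin m → ℂ, Eᴴ *ᵥ w = 0 →
      μ * l2norm w ^ 2 ≤ (hermInner w (B *ᵥ w)).re)
    (ε : ℝ) (hε : 0 ≤ ε)
    (hnorm : ∀ v : Fin n → ℂ, l2norm ((A - Eᴴ * B * E) *ᵥ v) ≤ ε * l2norm v) :
    ∀ j : Fin n,
      |sortedEigenvalues hA j - sortedEigenvalues hB (Fin.castLE hnm j)| ≤ ε := by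
  intro j
  have hclose : ∀ v, |quadForm A v - quadForm (Eᴴ * B * E) v| ≤ ε * normSum v := fun v => by
    rw [← quadForm_sub]
    exact abs_quadForm_le _ _ _ (hnorm v)
  rw [abs_le]
  constructor
  · obtain ⟨v, hv0, h1, h2⟩ := exists_compare hA hB E j (Fin.castLE hnm j) rfl
    rw [normSum_mulVec E hE, quadForm_mulVec] at h2
    have h3 := (abs_le.mp (hclose v)).1
    have hpos := normSum_pos hv0
    have : sortedEigenvalues hB (Fin.castLE hnm j) ≤ sortedEigenvalues hA j + ε :=
      le_of_mul_le_mul_right (by linarith) hpos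
    linarith
  · -- Comparing `A` with itself yields a vector whose Rayleigh quotient is exactly `λ_j(A)`.
    have hμj : sortedEigenvalues hA j - ε ≤ μ := by
      obtain ⟨v, hv0, -, h2⟩ := exists_compare hA hA 1 j j rfl
      rw [one_mulVec] at h2
      have h3 := (abs_le.mp (hclose v)).2
      have h4 := quadForm_le (Matrix.isHermitian_conjTranspose_mul_mul E hB) v μ
        fun i => Or.inr (hμ.2 ⟨i, rfl⟩)
      exact le_of_mul_le_mul_right (by linarith) (normSum_pos hv0)
    obtain ⟨w, hw0, h1, h2⟩ := exists_compare hB hA Eᴴ (Fin.castLE hnm j) j rfl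
    obtain ⟨v, hv⟩ : ∃ v, v = Eᴴ *ᵥ w := ⟨_, rfl⟩
    obtain ⟨u, hu⟩ : ∃ u, u = w - E *ᵥ v := ⟨_, rfl⟩
    rw [← hv] at h2
    have hEu : Eᴴ *ᵥ u = 0 := by
      rw [hu, mulVec_sub, mulVec_mulVec, hE, one_mulVec, hv, sub_self]
    have hw : w = E *ᵥ v + u := by rw [hu]; abel
    have hq : quadForm B w = quadForm (Eᴴ * B * E) v + quadForm B u := by
      rw [hw, quadForm_add_of_invariant hB hInv v u hEu, quadForm_mulVec]
    -- Pythagoras is the same splitting for the identity matrix.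
    have hs : normSum w = normSum v + normSum u := by
      rw [← normSum_mulVec E hE v]
      simp only [normSum_eq_quadForm_one]
      rw [hw]
      exact quadForm_add_of_invariant isHermitian_one (C := 1) (by simp) v u hEu
    have hgu : μ * normSum u ≤ quadForm B u := by
      have := hgap u hEu
      rw [l2norm_sq] at this
      exact this
    have h3 := (abs_le.mp (hclose v)).2
    have h4 := mul_le_mul_of_nonneg_right hμj (normSum_nonneg u)
    have : sortedEigenvalues hA j - ε ≤ sortedEigenvalues hB (Fin.castLE hnm j) := by
      refine le_of_mul_le_mul_right ?_ (normSum_pos hw0)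
      calc (sortedEigenvalues hA j - ε) * normSum w
          = (sortedEigenvalues hA j - ε) * normSum v
            + (sortedEigenvalues hA j - ε) * normSum u := by rw [hs]; ring
        _ ≤ quadForm B w := by rw [hq]; linarith
        _ ≤ _ := h1
    linarith
end
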